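/- For every real number ξ, the limit as u → 0⁻ of (1/(2πi)) ∫_{−∞}^{∞} [(−2η)/((1+η²)³ (ξ + iu − η))] dη exists and equals (1/2)[ −i/(8(ξ−i)²) + i(3ξ−7i)/(8(ξ−i)³) ]. -/

import Mathlib

open MeasureTheory Complex

lemma aux_inv (p : ℂ) : Filter.Tendsto (fun x : ℝ => ((x : ℂ) - p)⁻¹) (Filter.cocompact ℝ) (nhds 0) := by
  apply Filter.tendsto_inv₀_cobounded.comp
  have h : Filter.Tendsto (fun x : ℝ => (x : ℂ)) (Filter.cocompact ℝ) (Bornology.cobounded ℂ) := by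
    rw [← Metric.cobounded_eq_cocompact, ← tendsto_norm_atTop_iff_cobounded]
    simp only [norm_real]
    exact tendsto_norm_cobounded_atTop (E := ℝ)
  rw [← tendsto_norm_atTop_iff_cobounded] at h ⊢
  refine Filter.tendsto_atTop_mono (f := fun x : ℝ => ‖(x : ℂ)‖ + (-‖p‖)) (fun x => ?_)
    (Filter.tendsto_atTop_add_const_right _ _ h)
  have := norm_sub_norm_le (x : ℂ) p
  linarith

lemma aux_div (p c : ℂ) : Filter.Tendsto (fun t : ℝ => c - p / (t : ℂ)) Filter.atTop (nhds c) := by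
  have h := (aux_inv 0).mono_left (atTop_le_cocompact)
  have := (h.const_mul p).const_sub c
  simpa [div_eq_mul_inv] using this

lemma aux_top (p : ℂ) : Filter.Tendsto (fun t : ℝ => log ((t : ℂ) - p) - (Real.log t : ℂ))
    Filter.atTop (nhds 0) := by
  have h := (aux_div p 1).clog (by simp)
  rw [log_one] at h
  refine h.congr' ?_
  filter_upwards [Filter.eventually_gt_atTop 0, (aux_div p 1).eventually_ne one_ne_zero] with t ht hne
  have ht' : (t : ℂ) ≠ 0 := by exact_mod_cast ht.ne'
  have : (t : ℂ) - p = t * (1 - p / t) := by field_simp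
  rw [this, log_ofReal_mul ht hne]; ring

lemma aux_bot_pre (p : ℂ) (t : ℝ) (ht : 0 < t) (hne : -1 - p / (t : ℂ) ≠ 0) :
    log (-1 - p / (t:ℂ)) = log (((-t : ℝ) : ℂ) - p) - (Real.log t : ℂ) := by
  have ht' : (t : ℂ) ≠ 0 := by exact_mod_cast ht.ne'
  have : ((-t : ℝ) : ℂ) - p = t * (-1 - p / t) := by push_cast; field_simp
  rw [this, log_ofReal_mul ht hne]; ring

lemma aux_im (p : ℂ) (t : ℝ) : (-1 - p / (t : ℂ)).im = - p.im / t := by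
  rw [sub_im, div_ofReal_im]; simp [neg_div]

lemma aux_bot_up (p : ℂ) (hp : p.im < 0) :
    Filter.Tendsto (fun t : ℝ => log (((-t : ℝ) : ℂ) - p) - (Real.log t : ℂ))
    Filter.atTop (nhds (Real.pi * I)) := by
  have h := tendsto_log_nhdsWithin_im_nonneg_of_re_neg_of_im_zero (z := -1) (by simp) (by simp)
  have h2 : Filter.Tendsto (fun t : ℝ => -1 - p / (t : ℂ)) Filter.atTop
      (nhdsWithin (-1) {z : ℂ | 0 ≤ z.im}) := by
    refine tendsto_nhdsWithin_iff.2 ⟨aux_div p (-1), ?_⟩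
    filter_upwards [Filter.eventually_gt_atTop 0] with t ht
    simp only [Set.mem_ofPred_eq, aux_im]
    exact div_nonneg (by linarith) ht.le
  have h3 := h.comp h2
  simp only [norm_neg, norm_one, Real.log_one, ofReal_zero, zero_add] at h3
  refine h3.congr' ?_
  filter_upwards [Filter.eventually_gt_atTop 0, (aux_div p (-1)).eventually_ne (by simp : (-1:ℂ) ≠ 0)] with t ht hne
  exact aux_bot_pre p t ht hne

lemma aux_bot_dn (p : ℂ) (hp : 0 < p.im) :
    Filter.Tendsto (fun t : ℝ => log (((-t : ℝ) : ℂ) - p) - (Real.log t : ℂ))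
    Filter.atTop (nhds (-(Real.pi * I))) := by
  have h := tendsto_log_nhdsWithin_im_neg_of_re_neg_of_im_zero (z := -1) (by simp) (by simp)
  have h2 : Filter.Tendsto (fun t : ℝ => -1 - p / (t : ℂ)) Filter.atTop
      (nhdsWithin (-1) {z : ℂ | z.im < 0}) := by
    refine tendsto_nhdsWithin_iff.2 ⟨aux_div p (-1), ?_⟩
    filter_upwards [Filter.eventually_gt_atTop 0] with t ht
    simp only [Set.mem_ofPred_eq, aux_im]
    exact div_neg_of_neg_of_pos (by linarith) ht
  have h3 := h.comp h2
  simp only [norm_neg, norm_one, Real.log_one, ofReal_zero, zero_sub] at h3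
  refine h3.congr' ?_
  filter_upwards [Filter.eventually_gt_atTop 0, (aux_div p (-1)).eventually_ne (by simp : (-1:ℂ) ≠ 0)] with t ht hne
  exact aux_bot_pre p t ht hne

lemma aux_ne (p : ℂ) (hp : p.im ≠ 0) (x : ℝ) : (x : ℂ) - p ≠ 0 := by
  intro h
  have := congrArg Complex.im h
  simp at this; exact hp this

lemma aux_dlog (p : ℂ) (hp : p.im ≠ 0) (x : ℝ) :
    HasDerivAt (fun x : ℝ => log ((x : ℂ) - p)) (((x : ℂ) - p)⁻¹) x := by
  have h : HasDerivAt (fun x : ℝ => (x : ℂ) - p) 1 x := (ofRealCLM.hasDerivAt (x := x)).sub_const p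
  have := h.clog_real (by right; simpa using hp)
  simpa using this

lemma aux_dinv (p : ℂ) (hp : p.im ≠ 0) (x : ℝ) :
    HasDerivAt (fun x : ℝ => ((x : ℂ) - p)⁻¹) (-(((x : ℂ) - p)⁻¹)^2) x := by
  have h : HasDerivAt (fun x : ℝ => (x : ℂ) - p) 1 x := (ofRealCLM.hasDerivAt (x := x)).sub_const p
  have := h.fun_inv (aux_ne p hp x)
  refine this.congr_deriv ?_
  rw [inv_pow, neg_div, one_div]

lemma aux_sq (x : ℝ) : (1 : ℂ) + (x : ℂ) ^ 2 = ((x : ℂ) - I) * ((x : ℂ) - (-I)) := by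
  linear_combination I_sq

lemma aux_integrable (z : ℂ) (hz : z.im < 0) :
    Integrable (fun x : ℝ => (-2 * (x : ℂ)) / ((1 + (x : ℂ) ^ 2) ^ 3 * (z - (x : ℂ)))) := by
  have hne : ∀ x : ℝ, (1 + (x : ℂ) ^ 2) ^ 3 * (z - (x : ℂ)) ≠ 0 := by
    intro x
    refine mul_ne_zero (pow_ne_zero _ ?_) ?_
    · rw [aux_sq]; exact mul_ne_zero (aux_ne _ (by simp) x) (aux_ne _ (by simp) x)
    · rw [← neg_sub]; exact neg_ne_zero.2 (aux_ne z hz.ne x)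
  refine (integrable_inv_one_add_sq.const_mul (-z.im)⁻¹).mono' ?_ ?_
  · apply Continuous.aestronglyMeasurable
    exact Continuous.div (by fun_prop) (by fun_prop) hne
  · refine Filter.Eventually.of_forall fun x => ?_
    have e : (1 : ℂ) + (x : ℂ)^2 = ((1 + x^2 : ℝ) : ℂ) := by push_cast; rfl
    have hpos : 0 < 1 + x^2 := by positivity
    have hz1 : -z.im ≤ ‖z - x‖ := by
      have := abs_im_le_norm (z - x)
      have h2 := neg_abs_le (z - x).im
      simp at this h2; linarith
    have hz2 : 0 < -z.im := by linarith
    have hz3 : 0 < ‖z - x‖ := by linarith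
    rw [e, norm_div, norm_mul, norm_mul, norm_pow, norm_real, norm_real, Real.norm_of_nonneg hpos.le,
      ← mul_inv, ← one_div, div_le_div_iff₀ (by positivity) (by positivity)]
    simp only [norm_neg, norm_ofNat, one_mul, Real.norm_eq_abs]
    have h1 : 2 * |x| ≤ 1 + x^2 := by nlinarith [sq_nonneg (|x| - 1), sq_abs x]
    calc 2 * |x| * (-z.im * (1 + x^2)) ≤ (1+x^2) * (‖z - x‖ * (1+x^2)) := by gcongr
      _ = (1+x^2)^2 * ‖z-x‖ := by ring
      _ ≤ (1+x^2)^3 * ‖z-x‖ := by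
        gcongr
        · nlinarith [sq_nonneg x]
        · norm_num

lemma aux_integral (z : ℂ) (hz : z.im < 0) (hz' : z + I ≠ 0) :
    ∫ x : ℝ, (-2 * (x : ℂ)) / ((1 + (x : ℂ) ^ 2) ^ 3 * (z - (x : ℂ))) =
      2 * Real.pi * I * ((1/4) / (z - I)^3 + (I/8) / (z - I)^2) := by
  have hs : z - I ≠ 0 := by
    intro h
    have := congrArg Complex.im h
    simp at this; linarith
  obtain ⟨a, ha⟩ : ∃ a : ℂ, a = (1/4) / (z - I)^3 + (I/8) / (z - I)^2 := ⟨_, rfl⟩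
  obtain ⟨b, hb⟩ : ∃ b : ℂ, b = (1/4) / (z + I)^3 + (-I/8) / (z + I)^2 := ⟨_, rfl⟩
  obtain ⟨a2, ha2⟩ : ∃ a : ℂ, a = (1/4) / (z - I)^2 + (I/8) / (z - I) := ⟨_, rfl⟩
  obtain ⟨b2, hb2⟩ : ∃ b : ℂ, b = (1/4) / (z + I)^2 + (-I/8) / (z + I) := ⟨_, rfl⟩
  obtain ⟨a3, ha3⟩ : ∃ a : ℂ, a = (1/4) / (z - I) := ⟨_, rfl⟩
  obtain ⟨b3, hb3⟩ : ∃ b : ℂ, b = (1/4) / (z + I) := ⟨_, rfl⟩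
  let R : ℝ → ℂ := fun x => -a2 * ((x:ℂ) - I)⁻¹ + -b2 * ((x:ℂ) - (-I))⁻¹
    + -a3/2 * (((x:ℂ) - I)⁻¹)^2 + -b3/2 * (((x:ℂ) - (-I))⁻¹)^2
  let F : ℝ → ℂ := fun x => a * log ((x:ℂ) - I) + b * log ((x:ℂ) - (-I))
    + -(a+b) * log ((x:ℂ) - z) + R x
  have hI : (I).im ≠ 0 := by simp
  have hI' : (-I).im ≠ 0 := by simp
  have hR : Filter.Tendsto R (Filter.cocompact ℝ) (nhds 0) := by
    have h1 := aux_inv I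
    have h2 := aux_inv (-I)
    have := (((h1.const_mul (-a2)).add (h2.const_mul (-b2))).add ((h1.pow 2).const_mul (-a3/2))).add
      ((h2.pow 2).const_mul (-b3/2))
    have e0 : -a2 * 0 + -b2 * 0 + -a3/2 * 0^2 + -b3/2 * 0^2 = 0 := by ring
    rw [e0] at this
    exact this
  have hd : ∀ x : ℝ, HasDerivAt F ((-2 * (x : ℂ)) / ((1 + (x : ℂ) ^ 2) ^ 3 * (z - (x : ℂ)))) x := by
    intro x
    have h1 := aux_dinv I hI x
    have h2 := aux_dinv (-I) hI' x
    have hr := (((h1.const_mul (-a2)).fun_add (h2.const_mul (-b2))).fun_add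
      ((h1.fun_pow 2).const_mul (-a3/2))).fun_add ((h2.fun_pow 2).const_mul (-b3/2))
    have hf := ((((aux_dlog I hI x).const_mul a).fun_add ((aux_dlog (-I) hI' x).const_mul b)).fun_add
      ((aux_dlog z hz.ne x).const_mul (-(a+b)))).fun_add hr
    refine hf.congr_deriv ?_
    have n1 := aux_ne I hI x
    have n2 := aux_ne (-I) hI' x
    have n3 := aux_ne z hz.ne x
    rw [aux_sq]
    generalize (x:ℂ) = w at *
    rw [sub_neg_eq_add] at *
    have n4 : z - w ≠ 0 := by rw [← neg_sub]; exact neg_ne_zero.2 n3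
    have k1 : a * (w - I)⁻¹ - a * (w - z)⁻¹ + a2 * ((w-I)⁻¹)^2 + a3 * ((w-I)⁻¹)^3
        = ((1/4) * ((w-I)⁻¹)^3 + (I/8) * ((w-I)⁻¹)^2) / (z - w) := by
      have : w - z = -(z - w) := by ring
      rw [this, ha, ha2, ha3]
      obtain ⟨s, hs'⟩ : ∃ s, s = w - I := ⟨_, rfl⟩
      obtain ⟨t, ht'⟩ : ∃ t, t = z - I := ⟨_, rfl⟩
      have e : z - w = t - s := by rw [hs', ht']; ring
      rw [e] at n4 ⊢
      rw [← hs'] at n1 ⊢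
      rw [← ht'] at hs ⊢
      field_simp
      ring
    have k2 : b * (w + I)⁻¹ - b * (w - z)⁻¹ + b2 * ((w+I)⁻¹)^2 + b3 * ((w+I)⁻¹)^3
        = ((1/4) * ((w+I)⁻¹)^3 + (-I/8) * ((w+I)⁻¹)^2) / (z - w) := by
      have : w - z = -(z - w) := by ring
      rw [this, hb, hb2, hb3]
      obtain ⟨s, hs'⟩ : ∃ s, s = w + I := ⟨_, rfl⟩
      obtain ⟨t, ht'⟩ : ∃ t, t = z + I := ⟨_, rfl⟩
      have e : z - w = t - s := by rw [hs', ht']; ring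
      rw [e] at n4 ⊢
      rw [← hs'] at n2 ⊢
      rw [← ht'] at hz' ⊢
      field_simp
      ring
    have k3 : (-2 * w) / (((w-I)*(w+I))^3 * (z-w)) = ((1/4) * ((w-I)⁻¹)^3 + (I/8) * ((w-I)⁻¹)^2) / (z - w)
      + ((1/4) * ((w+I)⁻¹)^3 + (-I/8) * ((w+I)⁻¹)^2) / (z - w) := by
      have i3 : I^3 = -I := by rw [pow_succ, I_sq]; ring
      have i4 : I^4 = 1 := I_pow_four
      have i2 := I_sq
      rw [← add_div, mul_comm _ (z-w), ← div_div, div_right_comm]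
      congr 1
      field_simp
      ring_nf
      simp only [i2, i3, i4]
      ring
    rw [k3, ← k1, ← k2]
    ring
  have htop : Filter.Tendsto F Filter.atTop (nhds 0) := by
    have := ((((aux_top I).const_mul a).add ((aux_top (-I)).const_mul b)).add
      ((aux_top z).const_mul (-(a+b)))).add (hR.mono_left atTop_le_cocompact)
    simp only [mul_zero, add_zero] at this
    refine this.congr fun x => ?_
    simp only [F]; ring
  have hbot : Filter.Tendsto F Filter.atBot (nhds (-(2 * Real.pi * I * a))) := by
    have h0 := (hR.mono_left atBot_le_cocompact).comp Filter.tendsto_neg_atTop_atBot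
    have := ((((aux_bot_dn I (by simp)).const_mul a).add ((aux_bot_up (-I) (by simp)).const_mul b)).add
      ((aux_bot_up z hz).const_mul (-(a+b)))).add h0
    have h4 : Filter.Tendsto (fun t : ℝ => F (-t)) Filter.atTop (nhds (-(2 * Real.pi * I * a))) := by
      convert this using 2
      · simp only [F, Function.comp]; ring
      · ring
    have h5 := h4.comp Filter.tendsto_neg_atBot_atTop
    refine h5.congr fun x => ?_
    simp
  rw [integral_of_hasDerivAt_of_tendsto hd (aux_integrable z hz) hbot htop, ← ha]
  ring

/-- for every real ξ, the limit as u → 0⁻ of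
(1/(2πi)) ∫_{-∞}^{∞} (−2η) dη / ((1+η²)³ (ξ + iu − η)) equals
(1/2)[ −i/(8(ξ−i)²) + i(3ξ−7i)/(8(ξ−i)³) ]. -/
theorem pi_plus_neg_two_eta_over_one_plus_sq_cube (ξ : ℝ) :
    Filter.Tendsto
      (fun u : ℝ =>
        (1 / (2 * (Real.pi : ℂ) * I)) *
          ∫ η : ℝ, (-2 * (η : ℂ)) /
            ((1 + (η : ℂ) ^ 2) ^ 3 * ((ξ : ℂ) + I * (u : ℂ) - (η : ℂ))))
      (nhdsWithin 0 (Set.Iio 0))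
      (nhds ((1 / 2) * (-I / (8 * ((ξ : ℂ) - I) ^ 2)
        + I * (3 * (ξ : ℂ) - 7 * I) / (8 * ((ξ : ℂ) - I) ^ 3)))) := by
  have hs : (ξ : ℂ) - I ≠ 0 := aux_ne I (by simp) ξ
  have hc : Filter.Tendsto (fun u : ℝ => (1/4) / (((ξ : ℂ) + I * (u : ℂ)) - I)^3
      + (I/8) / (((ξ : ℂ) + I * (u : ℂ)) - I)^2) (nhdsWithin 0 (Set.Iio 0))
      (nhds ((1/4) / ((ξ : ℂ) - I)^3 + (I/8) / ((ξ : ℂ) - I)^2)) := by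
    have h : Filter.Tendsto (fun u : ℝ => ((ξ : ℂ) + I * (u : ℂ)) - I) (nhdsWithin 0 (Set.Iio 0))
        (nhds ((ξ : ℂ) - I)) := by
      have : Continuous (fun u : ℝ => ((ξ : ℂ) + I * (u : ℂ)) - I) := by fun_prop
      have h := this.tendsto 0
      simp only [ofReal_zero, mul_zero, add_zero] at h
      exact h.mono_left nhdsWithin_le_nhds
    exact ((tendsto_const_nhds.div (h.pow 3) (pow_ne_zero _ hs))).add
      (tendsto_const_nhds.div (h.pow 2) (pow_ne_zero _ hs))
  have e : (1 / 2) * (-I / (8 * ((ξ : ℂ) - I) ^ 2)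
        + I * (3 * (ξ : ℂ) - 7 * I) / (8 * ((ξ : ℂ) - I) ^ 3))
      = (1/4) / ((ξ : ℂ) - I)^3 + (I/8) / ((ξ : ℂ) - I)^2 := by
    have : I * (3 * (ξ : ℂ) - 7 * I) = 3 * I * ((ξ : ℂ) - I) + 4 := by
      linear_combination (-4) * I_sq
    rw [this]
    field_simp
    ring
  rw [e]
  refine hc.congr' ?_
  have hev : ∀ᶠ u : ℝ in nhdsWithin 0 (Set.Iio 0), -1 < u :=
    nhdsWithin_le_nhds (lt_mem_nhds (by norm_num))
  filter_upwards [hev, self_mem_nhdsWithin] with u hu1 hu2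
  have hu2' : u < 0 := hu2
  rw [aux_integral _ (by simpa using hu2')]
  · have : (Real.pi : ℂ) ≠ 0 := by exact_mod_cast Real.pi_ne_zero
    have hI := I_ne_zero
    rw [← mul_assoc, one_div_mul_cancel (by simp [this]), one_mul]
  · intro h
    have := congrArg Complex.im h
    simp at this
    linarith
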